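/- (Lemma 5, second part.) Let Θ=×_{e∈E}[l_e,r_e] be a parameter space, let 1 ≤ k ≤ |V|, and suppose there exists λ ≥ 0 such that r_e ≤ (1+λ)·l_e for every edge e ∈ E. Then the best achievable robust ratio satisfies max_{S⊆V, |S|=k} g(Θ,S) ≥ (1+λ)^{−n}, where n = |V|. -/

import Mathlib

/-!
Write `c = 1 + λ`. The heart of the matter is that `spread E θ' T ≤ c ^ n * spread E θ T` whenever
`θ ≤ θ' ≤ c θ` (`spread_compare`). A live-edge graph for `θ` is obtained from one for `θ'` by retaining each live edge
`e` independently with probability `q e = θ e / θ' e ≥ c⁻¹` (`spread_thinning`). Inside a live-edge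
graph `L`, the nodes reachable from `T` are already reachable through a forest of at most `n` edges
(`exists_small_certificate`), and this forest survives the thinning with probability at least
`(c ^ n)⁻¹`; so the expected number of reachable nodes drops by a factor of at most `c ^ n`.
The same coupling shows that the spread is monotone in `θ`.

Let `S` maximise the spread at the minimum vector `l`. For every admissible `θ` and every `T` of size
`k`, `spread θ T ≤ c ^ n * spread l T ≤ c ^ n * spread l S ≤ c ^ n * spread θ S`, which bounds
`OPT θ` by `c ^ n * spread θ S`.
-/

noncomputable def reachSet {V : Type*} [Fintype V] [DecidableEq V]
    (L : Finset (V × V)) (S : Finset V) : Finset V :=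
  @Finset.filter V
    (fun v => ∃ s ∈ S, Relation.ReflTransGen (fun a b : V => (a, b) ∈ L) s v)
    (fun _ => Classical.propDecidable _) Finset.univ

noncomputable def liveProb {V : Type*} [DecidableEq V]
    (E : Finset (V × V)) (θ : V × V → ℝ) (L : Finset (V × V)) : ℝ :=
  (∏ e ∈ L, θ e) * ∏ e ∈ E \ L, (1 - θ e)

noncomputable def spread {V : Type*} [Fintype V] [DecidableEq V]
    (E : Finset (V × V)) (θ : V × V → ℝ) (S : Finset V) : ℝ :=
  ∑ L ∈ E.powerset, liveProb E θ L * (reachSet L S).card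

noncomputable def OPT {V : Type*} [Fintype V] [DecidableEq V]
    (E : Finset (V × V)) (θ : V × V → ℝ) (k : ℕ) : ℝ :=
  sSup {x : ℝ | ∃ T : Finset V, T.card = k ∧ x = spread E θ T}

noncomputable def robustRatio {V : Type*} [Fintype V] [DecidableEq V]
    (E : Finset (V × V)) (l r : V × V → ℝ) (k : ℕ) (S : Finset V) : ℝ :=
  sInf {x : ℝ | ∃ θ : V × V → ℝ, (∀ e ∈ E, l e ≤ θ e ∧ θ e ≤ r e) ∧
    x = spread E θ S / OPT E θ k}
/-! ### Random subsets and thinning -/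

/-- Summing over the sets between `C` and `L` forces the factor `a` on `C` and leaves the choice
between `a` and `b` free on `L \ C`. -/
lemma sum_Icc_prod {ι : Type*} [DecidableEq ι] (a b : ι → ℝ) {C L : Finset ι} (h : C ⊆ L) :
    ∑ M ∈ Finset.Icc C L, (∏ e ∈ M, a e) * ∏ e ∈ L \ M, b e
      = (∏ e ∈ C, a e) * ∏ e ∈ L \ C, (a e + b e) := by
  rw [Finset.Icc_eq_image_powerset h, Finset.sum_image, Finset.prod_add, Finset.mul_sum]
  · refine Finset.sum_congr rfl fun D hD => ?_
    have hD' := Finset.mem_powerset.1 hD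
    rw [Finset.prod_union (Finset.disjoint_of_subset_right hD' Finset.disjoint_sdiff),
      sdiff_sdiff_left, mul_assoc]
    rfl
  · intro D hD D' hD' hDD
    have h1 := Finset.mem_powerset.1 (Finset.mem_coe.1 hD)
    have h2 := Finset.mem_powerset.1 (Finset.mem_coe.1 hD')
    ext x
    have hx := Finset.ext_iff.1 hDD x
    have h1x := @h1 x
    have h2x := @h2 x
    simp only [Finset.mem_union, Finset.mem_sdiff] at hx h1x h2x
    tauto

section

variable {V : Type*} [DecidableEq V]

lemma liveProb_nonneg {E L : Finset (V × V)} {θ : V × V → ℝ}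
    (hθ : ∀ e ∈ E, 0 ≤ θ e ∧ θ e ≤ 1) (hL : L ⊆ E) : 0 ≤ liveProb E θ L :=
  mul_nonneg (Finset.prod_nonneg fun e he => (hθ e (hL he)).1)
    (Finset.prod_nonneg fun e he => sub_nonneg.2 (hθ e (Finset.mem_sdiff.1 he).1).2)

/-- The probability that all edges of `C` are live. -/
lemma sum_Icc_liveProb {C L : Finset (V × V)} (q : V × V → ℝ) (h : C ⊆ L) :
    ∑ M ∈ Finset.Icc C L, liveProb L q M = ∏ e ∈ C, q e := by
  have := sum_Icc_prod q (fun e => 1 - q e) h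
  simpa [liveProb] using this

lemma sum_liveProb (E : Finset (V × V)) (θ : V × V → ℝ) :
    ∑ L ∈ E.powerset, liveProb E θ L = 1 := by
  have := sum_Icc_liveProb θ (Finset.empty_subset E)
  simpa [Finset.Icc_eq_filter_powerset] using this

/-- Thinning: a live-edge graph drawn with probabilities `θ`, each of whose edges is then retained
with probability `q`, equals `M` with the probability given by the product parameters. -/
lemma liveProb_thinning {E M : Finset (V × V)} (θ q : V × V → ℝ) (h : M ⊆ E) :
    liveProb E (fun e => θ e * q e) M
      = ∑ L ∈ Finset.Icc M E, liveProb E θ L * liveProb L q M := by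
  have key := sum_Icc_prod (fun e => θ e * if e ∈ M then q e else 1 - q e)
    (fun e => 1 - θ e) h
  rw [liveProb, Finset.prod_congr rfl (g := fun e => θ e * if e ∈ M then q e else 1 - q e)
    (fun e he => by simp [he]), Finset.prod_congr (s₁ := E \ M) rfl
    (g := fun e => (θ e * if e ∈ M then q e else 1 - q e) + (1 - θ e))
    (fun e he => by simp [(Finset.mem_sdiff.1 he).2]; ring), ← key]
  refine Finset.sum_congr rfl fun L hL => ?_
  have hML := (Finset.mem_Icc.1 hL).1
  rw [Finset.prod_mul_distrib, ← Finset.prod_sdiff (f := fun e => if e ∈ M then q e else 1 - q e) hML,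
    Finset.prod_congr rfl (g := q) (s₁ := M) (fun e he => by simp [he]),
    Finset.prod_congr rfl (g := fun e => 1 - q e) (s₁ := L \ M)
      (fun e he => by simp [(Finset.mem_sdiff.1 he).2]), liveProb, liveProb]
  ring

variable [Fintype V]

/-! ### Reachability -/

lemma mem_reachSet {L : Finset (V × V)} {S : Finset V} {v : V} :
    v ∈ reachSet L S ↔ ∃ s ∈ S, Relation.ReflTransGen (fun a b : V => (a, b) ∈ L) s v := by
  simp [reachSet]

lemma reachSet_mono {M L : Finset (V × V)} (h : M ⊆ L) (S : Finset V) :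
    reachSet M S ⊆ reachSet L S := by
  intro v hv
  obtain ⟨s, hs, hsv⟩ := mem_reachSet.1 hv
  exact mem_reachSet.2 ⟨s, hs, Relation.ReflTransGen.mono (fun _ _ hab => h hab) _ _ hsv⟩

lemma subset_reachSet (L : Finset (V × V)) (S : Finset V) : S ⊆ reachSet L S :=
  fun s hs => mem_reachSet.2 ⟨s, hs, .refl⟩

/-- Everything reachable in `L` is reachable using a subset of at most `|V|` edges. -/
lemma exists_small_certificate (L : Finset (V × V)) (S : Finset V) :
    ∃ C ⊆ L, C.card ≤ Fintype.card V ∧ reachSet L S ⊆ reachSet C S := by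
  classical
  -- Pairs (set of nodes, edges used to reach it), with at most one edge per node; a pair with the
  -- largest node set cannot be extended along an edge of `L`.
  let P : Finset (Finset V × Finset (V × V)) := Finset.univ.filter fun p =>
    S ⊆ p.1 ∧ p.2 ⊆ L ∧ p.2.card ≤ p.1.card ∧ p.1 ⊆ reachSet p.2 S
  have hP : P.Nonempty := ⟨(S, ∅), by simp [P, subset_reachSet]⟩
  obtain ⟨⟨A, C⟩, hmem, hmax⟩ := Finset.exists_max_image P (fun p => p.1.card) hP
  simp only [P, Finset.mem_filter, Finset.mem_univ, true_and] at hmem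
  obtain ⟨hSA, hCL, hCA, hAC⟩ := hmem
  refine ⟨C, hCL, hCA.trans (Finset.card_le_univ A), fun v hv => hAC ?_⟩
  obtain ⟨s, hs, hsv⟩ := mem_reachSet.1 hv
  clear hv
  induction hsv with
  | refl => exact hSA hs
  | @tail a b _ hab ha =>
    by_contra hb
    have hnew : (insert b A, insert (a, b) C) ∈ P := by
      simp only [P, Finset.mem_filter, Finset.mem_univ, true_and]
      refine ⟨hSA.trans (Finset.subset_insert _ _), Finset.insert_subset hab hCL, ?_, ?_⟩
      · rw [Finset.card_insert_of_notMem hb]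
        exact (Finset.card_insert_le _ _).trans (by omega)
      · have hA' := hAC.trans (reachSet_mono (Finset.subset_insert (a, b) C) S)
        refine Finset.insert_subset ?_ hA'
        obtain ⟨t, ht, hta⟩ := mem_reachSet.1 (hA' ha)
        exact mem_reachSet.2 ⟨t, ht, hta.tail (Finset.mem_insert_self _ _)⟩
    have := hmax _ hnew
    simp only [Finset.card_insert_of_notMem hb] at this
    omega

/-! ### Comparing spreads -/

/-- The coupling at the level of spreads: conditionally on the live-edge graph `L` for `θ`, average
over the subgraphs `M` of retained edges. -/
lemma spread_thinning (E : Finset (V × V)) (θ q : V × V → ℝ) (S : Finset V) :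
    spread E (fun e => θ e * q e) S
      = ∑ L ∈ E.powerset, liveProb E θ L *
          ∑ M ∈ L.powerset, liveProb L q M * (reachSet M S).card := by
  have h1 : spread E (fun e => θ e * q e) S = ∑ M ∈ E.powerset, ∑ L ∈ Finset.Icc M E,
      liveProb E θ L * (liveProb L q M * (reachSet M S).card) := by
    refine Finset.sum_congr rfl fun M hM => ?_
    rw [liveProb_thinning θ q (Finset.mem_powerset.1 hM), Finset.sum_mul]
    exact Finset.sum_congr rfl fun L _ => mul_assoc _ _ _
  rw [h1]
  simp only [Finset.mul_sum]
  refine Finset.sum_comm' fun M L => ?_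
  simp only [Finset.mem_powerset, Finset.mem_Icc]
  exact ⟨fun h => ⟨h.2.1, h.2.2⟩, fun h => ⟨h.1.trans h.2, h.1, h.2⟩⟩

lemma spread_congr {E : Finset (V × V)} {θ θ' : V × V → ℝ} (h : ∀ e ∈ E, θ e = θ' e)
    (S : Finset V) : spread E θ S = spread E θ' S := by
  refine Finset.sum_congr rfl fun L hL => ?_
  have hL := Finset.mem_powerset.1 hL
  rw [liveProb, liveProb, Finset.prod_congr rfl fun e he => h e (hL he),
    Finset.prod_congr (s₁ := E \ L) rfl fun e he => by rw [h e (Finset.mem_sdiff.1 he).1]]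

/-- Conditionally on `L`, thinning does not increase the mean number of reachable nodes. -/
lemma thinned_le {L : Finset (V × V)} {q : V × V → ℝ} (hq : ∀ e ∈ L, 0 ≤ q e ∧ q e ≤ 1)
    (S : Finset V) :
    ∑ M ∈ L.powerset, liveProb L q M * (reachSet M S).card ≤ (reachSet L S).card := by
  calc _ ≤ ∑ M ∈ L.powerset, liveProb L q M * ((reachSet L S).card : ℝ) := by
        refine Finset.sum_le_sum fun M hM => ?_
        have hM := Finset.mem_powerset.1 hM
        refine mul_le_mul_of_nonneg_left ?_ (liveProb_nonneg hq hM)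
        exact_mod_cast Finset.card_le_card (reachSet_mono hM S)
    _ = _ := by rw [← Finset.sum_mul, sum_liveProb, one_mul]

/-- Conditionally on `L`, if every edge is retained with probability at least `c⁻¹`, then the mean
number of reachable nodes drops by a factor of at most `c ^ |V|`: a small certificate for the
reachable set survives with at least that probability. -/
lemma le_thinned {L : Finset (V × V)} {q : V × V → ℝ} {c : ℝ} (hc : 1 ≤ c)
    (hq : ∀ e ∈ L, c⁻¹ ≤ q e ∧ q e ≤ 1) (S : Finset V) :
    (c ^ Fintype.card V)⁻¹ * (reachSet L S).card
      ≤ ∑ M ∈ L.powerset, liveProb L q M * (reachSet M S).card := by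
  obtain ⟨C, hCL, hCn, hC⟩ := exists_small_certificate L S
  have hc0 : 0 ≤ c⁻¹ := by positivity
  have hq0 : ∀ e ∈ L, 0 ≤ q e ∧ q e ≤ 1 := fun e he => ⟨hc0.trans (hq e he).1, (hq e he).2⟩
  calc (c ^ Fintype.card V)⁻¹ * ((reachSet L S).card : ℝ)
      ≤ (∏ e ∈ C, q e) * (reachSet L S).card := by
        refine mul_le_mul_of_nonneg_right ?_ (Nat.cast_nonneg _)
        calc (c ^ Fintype.card V)⁻¹ = c⁻¹ ^ Fintype.card V := (inv_pow _ _).symm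
          _ ≤ c⁻¹ ^ C.card := pow_le_pow_of_le_one hc0 (inv_le_one_of_one_le₀ hc) hCn
          _ = ∏ _e ∈ C, c⁻¹ := by simp
          _ ≤ _ := Finset.prod_le_prod (fun _ _ => hc0) fun e he => (hq e (hCL he)).1
    _ = ∑ M ∈ Finset.Icc C L, liveProb L q M * (reachSet L S).card := by
        rw [← Finset.sum_mul, sum_Icc_liveProb q hCL]
    _ ≤ ∑ M ∈ Finset.Icc C L, liveProb L q M * (reachSet M S).card := by
        refine Finset.sum_le_sum fun M hM => ?_
        obtain ⟨hCM, hML⟩ := Finset.mem_Icc.1 hM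
        refine mul_le_mul_of_nonneg_left ?_ (liveProb_nonneg hq0 hML)
        exact_mod_cast Finset.card_le_card (hC.trans (reachSet_mono hCM S))
    _ ≤ _ := by
        refine Finset.sum_le_sum_of_subset_of_nonneg
          (fun M hM => Finset.mem_powerset.2 (Finset.mem_Icc.1 hM).2) fun M hM _ => ?_
        exact mul_nonneg (liveProb_nonneg hq0 (Finset.mem_powerset.1 hM)) (Nat.cast_nonneg _)

/-- Both bounds come from averaging the conditional estimates `thinned_le` and `le_thinned` over the
live-edge graphs for `θ'`, with retention probabilities `θ e / θ' e`. -/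
lemma spread_compare {E : Finset (V × V)} {θ θ' : V × V → ℝ} {c : ℝ} (hc : 1 ≤ c)
    (h : ∀ e ∈ E, 0 ≤ θ e ∧ θ e ≤ θ' e ∧ θ' e ≤ 1 ∧ θ' e ≤ c * θ e) (S : Finset V) :
    spread E θ S ≤ spread E θ' S ∧
      (c ^ Fintype.card V)⁻¹ * spread E θ' S ≤ spread E θ S := by
  have hc0 : 0 < c := by linarith
  -- The retention probability is set to `1` where `θ'` vanishes, so that `c⁻¹ ≤ q` holds there too.
  let q : V × V → ℝ := fun e => if θ' e = 0 then 1 else θ e / θ' e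
  have hθ' : ∀ e ∈ E, 0 ≤ θ' e ∧ θ' e ≤ 1 := fun e he =>
    ⟨(h e he).1.trans (h e he).2.1, (h e he).2.2.1⟩
  have hmul : ∀ e ∈ E, θ e = θ' e * q e := by
    intro e he
    obtain ⟨h0, h1, -, -⟩ := h e he
    by_cases hz : θ' e = 0
    · simp only [q, hz, if_true]; linarith
    · simp only [q, hz, if_false]; field_simp
  have hq : ∀ e ∈ E, c⁻¹ ≤ q e ∧ q e ≤ 1 := by
    intro e he
    obtain ⟨h0, h1, -, h2⟩ := h e he
    by_cases hz : θ' e = 0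
    · simp only [q, hz, if_true]; exact ⟨inv_le_one_of_one_le₀ hc, le_rfl⟩
    · simp only [q, hz, if_false]
      have hpos : 0 < θ' e := lt_of_le_of_ne (hθ' e he).1 (Ne.symm hz)
      refine ⟨?_, (div_le_one hpos).2 h1⟩
      rw [le_div_iff₀ hpos, inv_mul_le_iff₀ hc0]
      exact h2
  rw [spread_congr hmul, spread_thinning]
  constructor
  · refine Finset.sum_le_sum fun L hL => ?_
    have hL := Finset.mem_powerset.1 hL
    exact mul_le_mul_of_nonneg_left
      (thinned_le (fun e he => ⟨(inv_pos.2 hc0).le.trans (hq e (hL he)).1, (hq e (hL he)).2⟩) S)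
      (liveProb_nonneg hθ' hL)
  · rw [spread, Finset.mul_sum]
    refine Finset.sum_le_sum fun L hL => ?_
    have hL := Finset.mem_powerset.1 hL
    rw [mul_left_comm]
    exact mul_le_mul_of_nonneg_left (le_thinned hc (fun e he => hq e (hL he)) S)
      (liveProb_nonneg hθ' hL)

lemma card_le_spread {E : Finset (V × V)} {θ : V × V → ℝ} (hθ : ∀ e ∈ E, 0 ≤ θ e ∧ θ e ≤ 1)
    (S : Finset V) : (S.card : ℝ) ≤ spread E θ S := by
  calc (S.card : ℝ) = ∑ L ∈ E.powerset, liveProb E θ L * S.card := by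
        rw [← Finset.sum_mul, sum_liveProb, one_mul]
    _ ≤ _ := Finset.sum_le_sum fun L hL => mul_le_mul_of_nonneg_left
        (by exact_mod_cast Finset.card_le_card (subset_reachSet L S))
        (liveProb_nonneg hθ (Finset.mem_powerset.1 hL))

end

/-! ### The robust ratio -/

/-- Lemma 5, second part: if `r e ≤ (1+λ)·l e` for every edge `e ∈ E`,
then the best achievable robust ratio over size-`k` seed sets is at least `(1+λ)^{−n}`. -/
theorem best_robust_ratio_multiplicative {V : Type*} [Fintype V] [DecidableEq V]
    (E : Finset (V × V)) (n : ℕ) (hn : n = Fintype.card V)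
    (l r : V × V → ℝ)
    (hlr : ∀ e ∈ E, 0 ≤ l e ∧ l e ≤ r e ∧ r e ≤ 1)
    (k : ℕ) (hk : 1 ≤ k) (hkn : k ≤ Fintype.card V)
    (lam : ℝ) (hlam : 0 ≤ lam)
    (hmul : ∀ e ∈ E, r e ≤ (1 + lam) * l e) :
    ∃ S : Finset V, S.card = k ∧ ((1 + lam) ^ n)⁻¹ ≤ robustRatio E l r k S := by
  subst hn
  have hc : (1 : ℝ) ≤ 1 + lam := by linarith
  have hcn : 0 < (1 + lam) ^ Fintype.card V := by positivity
  obtain ⟨S, hS, hmax⟩ := Finset.exists_max_image (Finset.univ.powersetCard k) (spread E l)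
    (Finset.powersetCard_nonempty.2 (by simpa using hkn))
  have hSk := (Finset.mem_powersetCard.1 hS).2
  refine ⟨S, hSk, le_csInf ⟨_, l, fun e he => ⟨le_rfl, (hlr e he).2.1⟩, rfl⟩ ?_⟩
  rintro x ⟨θ, hθ, rfl⟩
  have hcomp := fun T => spread_compare (θ := l) (θ' := θ) (E := E) hc (fun e he =>
    ⟨(hlr e he).1, (hθ e he).1, (hθ e he).2.trans (hlr e he).2.2,
      (hθ e he).2.trans (hmul e he)⟩) T
  have hle : ∀ T : Finset V, T.card = k →
      spread E θ T ≤ (1 + lam) ^ Fintype.card V * spread E θ S := by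
    intro T hT
    rw [← inv_mul_le_iff₀ hcn]
    exact (hcomp T).2.trans ((hmax T (by simp [Finset.mem_powersetCard, hT])).trans (hcomp S).1)
  have hOPT : OPT E θ k ≤ (1 + lam) ^ Fintype.card V * spread E θ S :=
    csSup_le ⟨_, S, hSk, rfl⟩ (by rintro x ⟨T, hT, rfl⟩; exact hle T hT)
  have hpos : 0 < OPT E θ k := by
    have h1 : spread E θ S ≤ OPT E θ k :=
      le_csSup ⟨_, by rintro x ⟨T, hT, rfl⟩; exact hle T hT⟩ ⟨S, hSk, rfl⟩
    have h2 := card_le_spread (E := E) (θ := θ) (fun e he =>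
      ⟨(hlr e he).1.trans (hθ e he).1, (hθ e he).2.trans (hlr e he).2.2⟩) S
    have h3 : (1 : ℝ) ≤ S.card := by exact_mod_cast hSk ▸ hk
    linarith
  rw [le_div_iff₀ hpos, inv_mul_le_iff₀ hcn]
  exact hOPT
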